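/- arXiv:1702.01677 — 2 statements merged into one kernel-verified Lean document; each statement's English description precedes it below -/
import Mathlib

section
/- Let G be a task graph with present bias β ∈ (0,1], let r > 0 be a reward, and let G' be a subgraph of G containing at least one s–t path. Define the cost configuration c̃ on G by c̃(e) = r + 1 for every edge e of G not in G' and c̃(e) = 0 for every edge of G'. Then G' is motivating for reward r if and only if c̃ is motivating for reward r; moreover, when motivating, the sets of greedy walks the agent may take from s to t under G' and under c̃ coincide. -/
/-!
The agent's greedy steps in the subgraph `E'` and in `G` with the penalty costs are literally the
same relation (`greedyStep_iff`); since agent reachability, motivation and agent walks are all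
defined through greedy steps, the theorem follows at once.

For the equality of the relations, a greedy step from `v` is rewritten as a plan `(v, w)` of
minimal perceived cost among all plans, with perceived cost at most `β * r`
(`greedyStep_iff_forall_le`; the infimum is attained because `V` is finite). Only plans of perceived
cost at most `β * r` matter then. Such a plan cannot use an edge outside `E'`: its first edge would
cost at least `r + 1 > β * r`, while its cheapest continuation to `t` costs at most `r`, and
a walk leaving `E'` costs at least `r + 1`. Conversely, edges of `E'` are not penalised. Hence the plans of perceived cost at
most `β * r`, with their perceived costs, agree in the two graphs (`plan_of_config`,
`plan_of_subgraph`).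
-/

/-!
Framework: task graphs, present-biased agents, perceived costs, greedy walks,
motivating rewards, cost configurations and subgraphs
(Kleinberg–Oren model, following Albers–Kraft).
-/

variable {V : Type} [Fintype V] [DecidableEq V]

/-- The list of (directed) edges traversed by a walk given as a list of vertices. -/
def walkEdges (p : List V) : List (V × V) := p.zip p.tail

/-- `p` is a walk in the edge set `E`: consecutive vertices are joined by edges. -/
def IsWalk (E : Finset (V × V)) (p : List V) : Prop :=
  List.Chain' (fun u v : V => (u, v) ∈ E) p

/-- `p` is a walk in `E` from `a` to `b`. -/
def IsWalkFrom (E : Finset (V × V)) (p : List V) (a b : V) : Prop :=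
  IsWalk E p ∧ p.head? = some a ∧ p.getLast? = some b

/-- There is a walk in `E` from `a` to `b`. -/
def Reaches (E : Finset (V × V)) (a b : V) : Prop :=
  ∃ p : List V, IsWalkFrom E p a b

/-- Total cost of a walk. -/
noncomputable def walkCost (c : V × V → ℝ) (p : List V) : ℝ :=
  ((walkEdges p).map c).sum

/-- A task graph: a finite DAG with source `s`, target `t`, nonnegative edge
costs, in which every node lies on some directed path from `s` to `t`. -/
structure TaskGraph (V : Type) [Fintype V] [DecidableEq V] where
  E : Finset (V × V)
  s : V
  t : V
  c : V × V → ℝ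
  c_nonneg : ∀ e ∈ E, 0 ≤ c e
  acyclic : ∀ p : List V, IsWalk E p → p.Nodup
  onPath : ∀ v : V, ∃ p : List V, IsWalkFrom E p s t ∧ v ∈ p

/-- `dcost E c t v` : cost of a cheapest walk from `v` to `t` in `E` w.r.t. costs `c`. -/
noncomputable def dcost (E : Finset (V × V)) (c : V × V → ℝ) (t v : V) : ℝ :=
  sInf (walkCost c '' {p : List V | IsWalkFrom E p v t})

/-- Perceived cost `η(v,w) = c(v,w) + β d(w)` of an edge for a `β`-present-biased agent. -/
noncomputable def etaCost (E : Finset (V × V)) (c : V × V → ℝ) (t : V) (β : ℝ)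
    (e : V × V) : ℝ :=
  c e + β * dcost E c t e.2

/-- Lowest perceived cost `ζ(v)`: the infimum of `η(v,w)` over edges `(v,w) ∈ E`
whose head `w` admits a continuation to `t` (i.e. over the agent's possible plans). -/
noncomputable def zetaCost (E : Finset (V × V)) (c : V × V → ℝ) (t : V) (β : ℝ)
    (v : V) : ℝ :=
  sInf {x : ℝ | ∃ w : V, (v, w) ∈ E ∧ Reaches E w t ∧ etaCost E c t β (v, w) = x}

/-- One step of the agent's greedy walk for reward `r`: she traverses only
edges realizing the lowest perceived cost, and only if `ζ(v) ≤ β r`. -/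
def GreedyStep (E : Finset (V × V)) (c : V × V → ℝ) (t : V) (β r : ℝ) (v w : V) : Prop :=
  v ≠ t ∧ (v, w) ∈ E ∧ Reaches E w t ∧
    etaCost E c t β (v, w) = zetaCost E c t β v ∧ zetaCost E c t β v ≤ β * r

/-- Nodes the agent may visit on some greedy walk from `s`. -/
inductive AgentReach (E : Finset (V × V)) (c : V × V → ℝ) (s t : V) (β r : ℝ) : V → Prop
  | start : AgentReach E c s t β r s
  | step {v w : V} : AgentReach E c s t β r v → GreedyStep E c t β r v w →
      AgentReach E c s t β r w

/-- The task graph (with edge set `E`, costs `c`) is motivating for reward `r`: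
at every node the agent may reach, she neither abandons nor gets stuck,
i.e. she can always perform a greedy step (hence, the graph being a finite DAG,
she reaches `t` on every greedy walk). -/
def Motivating (E : Finset (V × V)) (c : V × V → ℝ) (s t : V) (β r : ℝ) : Prop :=
  ∀ v : V, AgentReach E c s t β r v → v ≠ t → ∃ w : V, GreedyStep E c t β r v w

/-- A complete greedy walk of the agent from `s` to `t`. -/
def AgentWalk (E : Finset (V × V)) (c : V × V → ℝ) (s t : V) (β r : ℝ) (p : List V) : Prop :=
  IsWalkFrom E p s t ∧ List.Chain' (GreedyStep E c t β r) p

/-- An initial segment of a greedy walk of the agent starting at `s`. -/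
def GreedyPrefix (E : Finset (V × V)) (c : V × V → ℝ) (s t : V) (β r : ℝ) (p : List V) : Prop :=
  p.head? = some s ∧ List.Chain' (GreedyStep E c t β r) p

/-- A cost configuration: nonnegative extra costs on the edges. -/
def CostConfig (c' : V × V → ℝ) : Prop := ∀ e : V × V, 0 ≤ c' e

/-- The modified costs obtained by applying a cost configuration to `G`. -/
noncomputable def addc (G : TaskGraph V) (c' : V × V → ℝ) : V × V → ℝ :=
  fun e => G.c e + c' e

/-- The cost configuration `c'` is motivating for reward `r` on `G`. -/
def MotivatingConfig (G : TaskGraph V) (β r : ℝ) (c' : V × V → ℝ) : Prop :=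
  Motivating G.E (addc G c') G.s G.t β r

/-- The subgraph of `G` with edge set `E'` (retaining an `s`–`t` path) is
motivating for reward `r`; all quantities are computed within the subgraph. -/
def MotivatingSubgraph (G : TaskGraph V) (β r : ℝ) (E' : Finset (V × V)) : Prop :=
  E' ⊆ G.E ∧ (∃ p : List V, IsWalkFrom E' p G.s G.t) ∧ Motivating E' G.c G.s G.t β r

/-! ### Walks and their costs -/

lemma isWalk_iff_forall_mem (E : Finset (V × V)) (p : List V) :
    IsWalk E p ↔ ∀ e ∈ walkEdges p, e ∈ E := by
  change List.IsChain _ p ↔ _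
  unfold walkEdges
  induction p with
  | nil => simp
  | cons a l ih =>
    cases l with
    | nil => simp
    | cons b l => simp_all [List.isChain_cons_cons]

lemma walkCost_nonneg {E : Finset (V × V)} {c : V × V → ℝ} (hc : ∀ e ∈ E, 0 ≤ c e)
    {p : List V} (hp : IsWalk E p) : 0 ≤ walkCost c p := by
  apply List.sum_nonneg
  intro x hx
  obtain ⟨e, he, rfl⟩ := List.mem_map.1 hx
  exact hc e ((isWalk_iff_forall_mem E p).1 hp e he)

lemma le_walkCost_of_mem {E : Finset (V × V)} {c : V × V → ℝ} (hc : ∀ e ∈ E, 0 ≤ c e)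
    {p : List V} (hp : IsWalk E p) {e : V × V} (he : e ∈ walkEdges p) : c e ≤ walkCost c p := by
  apply List.single_le_sum
  · intro x hx
    obtain ⟨e, he, rfl⟩ := List.mem_map.1 hx
    exact hc e ((isWalk_iff_forall_mem E p).1 hp e he)
  · exact List.mem_map.2 ⟨e, he, rfl⟩

lemma walkCost_congr {c₁ c₂ : V × V → ℝ} {E : Finset (V × V)} (h : ∀ e ∈ E, c₁ e = c₂ e)
    {p : List V} (hp : IsWalk E p) : walkCost c₁ p = walkCost c₂ p := by
  unfold walkCost
  congr 1
  exact List.map_congr_left fun e he => h e ((isWalk_iff_forall_mem E p).1 hp e he)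

lemma dcost_le_walkCost {E : Finset (V × V)} {c : V × V → ℝ} (hc : ∀ e ∈ E, 0 ≤ c e)
    {p : List V} {v t : V} (hp : IsWalkFrom E p v t) : dcost E c t v ≤ walkCost c p := by
  refine csInf_le ⟨0, ?_⟩ ⟨p, hp, rfl⟩
  rintro _ ⟨q, hq, rfl⟩
  exact walkCost_nonneg hc hq.1

lemma dcost_nonneg {E : Finset (V × V)} {c : V × V → ℝ} (hc : ∀ e ∈ E, 0 ≤ c e) (t v : V) :
    0 ≤ dcost E c t v := by
  apply Real.sInf_nonneg
  rintro _ ⟨q, hq, rfl⟩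
  exact walkCost_nonneg hc hq.1

lemma le_dcost {E : Finset (V × V)} {c : V × V → ℝ} {v t : V} {x : ℝ} (hv : Reaches E v t)
    (h : ∀ p, IsWalkFrom E p v t → x ≤ walkCost c p) : x ≤ dcost E c t v := by
  obtain ⟨p, hp⟩ := hv
  refine le_csInf ⟨_, p, hp, rfl⟩ ?_
  rintro _ ⟨q, hq, rfl⟩
  exact h q hq

lemma exists_walkCost_lt {E : Finset (V × V)} {c : V × V → ℝ} {v t : V} {x : ℝ}
    (hv : Reaches E v t) (h : dcost E c t v < x) : ∃ p, IsWalkFrom E p v t ∧ walkCost c p < x := by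
  by_contra! hx
  exact absurd (le_dcost hv hx) (not_le.2 h)

lemma Reaches.mono {E E' : Finset (V × V)} (h : E' ⊆ E) {v t : V} (hv : Reaches E' v t) :
    Reaches E v t := by
  obtain ⟨p, hp, h1⟩ := hv
  exact ⟨p, hp.imp fun _ _ he => h he, h1⟩

/-! ### Greedy steps as minimisers -/

lemma greedyStep_iff_forall_le (E : Finset (V × V)) (c : V × V → ℝ) (t : V) (β r : ℝ) (v w : V) :
    GreedyStep E c t β r v w ↔ v ≠ t ∧ (v, w) ∈ E ∧ Reaches E w t ∧
      etaCost E c t β (v, w) ≤ β * r ∧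
      ∀ u, (v, u) ∈ E → Reaches E u t → etaCost E c t β (v, w) ≤ etaCost E c t β (v, u) := by
  have hfin : {x : ℝ | ∃ w : V, (v, w) ∈ E ∧ Reaches E w t ∧ etaCost E c t β (v, w) = x}.Finite :=
    (Set.finite_range fun w => etaCost E c t β (v, w)).subset
      fun x ⟨w, _, _, hx⟩ => ⟨w, hx⟩
  constructor
  · rintro ⟨hv, hw, hr, he, hz⟩
    refine ⟨hv, hw, hr, he.trans_le hz, fun u hu hu' => he.trans_le ?_⟩
    exact csInf_le hfin.bddBelow ⟨u, hu, hu', rfl⟩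
  · rintro ⟨hv, hw, hr, hz, hmin⟩
    have he : etaCost E c t β (v, w) = zetaCost E c t β v := by
      apply le_antisymm
      · refine le_csInf ⟨_, w, hw, hr, rfl⟩ ?_
        rintro _ ⟨u, hu, hu', rfl⟩
        exact hmin u hu hu'
      · exact csInf_le hfin.bddBelow ⟨w, hw, hr, rfl⟩
    exact ⟨hv, hw, hr, he, he ▸ hz⟩

/-! ### Comparison of the subgraph with the penalty costs -/

section Penalty

variable {E E' : Finset (V × V)} {c cp : V × V → ℝ} {r β : ℝ}

/-- If the cheapest continuation under the penalised costs `cp` costs at most `r`, below the penalty,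
it stays inside `E'`, so its cost is also the cheapest one within `E'`. -/
lemma reaches_and_dcost_eq (hE : E' ⊆ E) (hc : ∀ e ∈ E, 0 ≤ cp e)
    (heq : ∀ e ∈ E', cp e = c e) (hpen : ∀ e ∈ E, e ∉ E' → r + 1 ≤ cp e) {w t : V}
    (hw : Reaches E w t) (hd : dcost E cp t w ≤ r) :
    Reaches E' w t ∧ dcost E cp t w = dcost E' c t w := by
  have hc' : ∀ e ∈ E', 0 ≤ c e := fun e he => heq e he ▸ hc e (hE he)
  have key : ∀ p, IsWalkFrom E p w t → walkCost cp p < r + 1 → IsWalkFrom E' p w t := by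
    intro p hp hlt
    refine ⟨(isWalk_iff_forall_mem E' p).2 fun e he => ?_, hp.2⟩
    by_contra hne
    have h1 := le_walkCost_of_mem hc hp.1 he
    have h2 := hpen e ((isWalk_iff_forall_mem E p).1 hp.1 e he) hne
    linarith
  obtain ⟨p, hp, hlt⟩ := exists_walkCost_lt hw (hd.trans_lt (lt_add_one r))
  have hp' := key p hp hlt
  refine ⟨⟨p, hp'⟩, le_antisymm ?_ (le_dcost hw fun q hq => ?_)⟩
  · refine le_dcost ⟨p, hp'⟩ fun q hq => ?_
    rw [← walkCost_congr heq hq.1]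
    exact dcost_le_walkCost hc ⟨hq.1.imp fun _ _ he => hE he, hq.2⟩
  · rcases lt_or_ge (walkCost cp q) (r + 1) with hq1 | hq1
    · have hq' := key q hq hq1
      rw [walkCost_congr heq hq'.1]
      exact dcost_le_walkCost hc' hq'
    · have h1 := dcost_le_walkCost hc' hp'
      rw [← walkCost_congr heq hp'.1] at h1
      linarith

lemma plan_of_config (hβ0 : 0 < β) (hβ1 : β ≤ 1) (hr : 0 < r) (hE : E' ⊆ E)
    (hc : ∀ e ∈ E, 0 ≤ cp e)
    (heq : ∀ e ∈ E', cp e = c e) (hpen : ∀ e ∈ E, e ∉ E' → r + 1 ≤ cp e) {v w t : V}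
    (hvw : (v, w) ∈ E) (hw : Reaches E w t) (h : etaCost E cp t β (v, w) ≤ β * r) :
    (v, w) ∈ E' ∧ Reaches E' w t ∧ etaCost E cp t β (v, w) = etaCost E' c t β (v, w) := by
  unfold etaCost at h ⊢
  have hd0 := mul_nonneg hβ0.le (dcost_nonneg hc t w)
  have hβr : β * r ≤ r := by nlinarith
  have hmem : (v, w) ∈ E' := by
    by_contra hne
    have := hpen _ hvw hne
    dsimp only at h
    linarith
  have hd : dcost E cp t w ≤ r := by
    have := hc _ hvw
    dsimp only at h
    exact le_of_mul_le_mul_left (by linarith) hβ0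
  obtain ⟨h1, h2⟩ := reaches_and_dcost_eq hE hc heq hpen hw hd
  exact ⟨hmem, h1, by rw [heq _ hmem, h2]⟩

lemma plan_of_subgraph (hβ0 : 0 < β) (hE : E' ⊆ E) (hc : ∀ e ∈ E, 0 ≤ cp e)
    (heq : ∀ e ∈ E', cp e = c e) (hpen : ∀ e ∈ E, e ∉ E' → r + 1 ≤ cp e) {v w t : V}
    (hvw : (v, w) ∈ E') (hw : Reaches E' w t) (h : etaCost E' c t β (v, w) ≤ β * r) :
    etaCost E cp t β (v, w) = etaCost E' c t β (v, w) := by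
  unfold etaCost at h ⊢
  have hle : dcost E cp t w ≤ dcost E' c t w := by
    refine le_dcost hw fun q hq => ?_
    rw [← walkCost_congr heq hq.1]
    exact dcost_le_walkCost hc ⟨hq.1.imp fun _ _ he => hE he, hq.2⟩
  have hd : dcost E' c t w ≤ r := by
    have := hc _ (hE hvw)
    rw [heq _ hvw] at this
    dsimp only at h
    exact le_of_mul_le_mul_left (by linarith) hβ0
  obtain ⟨-, h2⟩ := reaches_and_dcost_eq hE hc heq hpen (hw.mono hE) (hle.trans hd)
  rw [heq _ hvw, h2]

lemma greedyStep_iff (hβ0 : 0 < β) (hβ1 : β ≤ 1) (hr : 0 < r) (hE : E' ⊆ E)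
    (hc : ∀ e ∈ E, 0 ≤ cp e)
    (heq : ∀ e ∈ E', cp e = c e) (hpen : ∀ e ∈ E, e ∉ E' → r + 1 ≤ cp e) (t v w : V) :
    GreedyStep E' c t β r v w ↔ GreedyStep E cp t β r v w := by
  rw [greedyStep_iff_forall_le, greedyStep_iff_forall_le]
  constructor
  · rintro ⟨hv, hvw, hw, hle, hmin⟩
    have hη := plan_of_subgraph hβ0 hE hc heq hpen hvw hw hle
    refine ⟨hv, hE hvw, hw.mono hE, hη.trans_le hle, fun u hu hu' => ?_⟩
    rw [hη]
    -- A competing plan above the threshold `β * r` is no threat; one below it lives in `E'`.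
    rcases le_total (etaCost E cp t β (v, u)) (β * r) with h | h
    · obtain ⟨h1, h2, h3⟩ := plan_of_config hβ0 hβ1 hr hE hc heq hpen hu hu' h
      exact h3 ▸ hmin u h1 h2
    · exact hle.trans h
  · rintro ⟨hv, hvw, hw, hle, hmin⟩
    obtain ⟨h1, h2, hη⟩ := plan_of_config hβ0 hβ1 hr hE hc heq hpen hvw hw hle
    refine ⟨hv, h1, h2, hη ▸ hle, fun u hu hu' => ?_⟩
    rw [← hη]
    rcases le_total (etaCost E' c t β (v, u)) (β * r) with h | h
    · rw [← plan_of_subgraph hβ0 hE hc heq hpen hu hu' h]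
      exact hmin u (hE hu) (hu'.mono hE)
    · exact hle.trans h

end Penalty

lemma agentReach_mono {E₁ E₂ : Finset (V × V)} {c₁ c₂ : V × V → ℝ} {s t : V} {β r : ℝ}
    (h : ∀ v w, GreedyStep E₁ c₁ t β r v w → GreedyStep E₂ c₂ t β r v w) {v : V}
    (hv : AgentReach E₁ c₁ s t β r v) : AgentReach E₂ c₂ s t β r v := by
  induction hv with
  | start => exact .start
  | step _ hs ih => exact .step ih (h _ _ hs)

lemma motivating_of_greedyStep_iff {E₁ E₂ : Finset (V × V)} {c₁ c₂ : V × V → ℝ} {s t : V} {β r : ℝ}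
    (h : ∀ v w, GreedyStep E₁ c₁ t β r v w ↔ GreedyStep E₂ c₂ t β r v w)
    (hm : Motivating E₁ c₁ s t β r) : Motivating E₂ c₂ s t β r := by
  intro v hv hvt
  obtain ⟨w, hw⟩ := hm v (agentReach_mono (fun v w => (h v w).2) hv) hvt
  exact ⟨w, (h v w).1 hw⟩

/-- Greedy steps run along edges, so an agent walk transfers to any graph with the same
greedy steps. -/
lemma agentWalk_mono {E₁ E₂ : Finset (V × V)} {c₁ c₂ : V × V → ℝ} {s t : V} {β r : ℝ}
    (h : ∀ v w, GreedyStep E₁ c₁ t β r v w → GreedyStep E₂ c₂ t β r v w) {q : List V}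
    (hq : AgentWalk E₁ c₁ s t β r q) : AgentWalk E₂ c₂ s t β r q :=
  ⟨⟨hq.2.imp fun v w hs => (h v w hs).2.1, hq.1.2⟩, hq.2.imp fun v w hs => h v w hs⟩

/-- Let `E'` be a subgraph of `G` containing an `s`–`t` path and
let `c'` be the cost configuration charging `r + 1` on every edge of `G` outside
`E'` and `0` on the edges of `E'`. Then the subgraph `E'` is motivating for reward
`r` iff `c'` is, and (when motivating) the sets of greedy walks the agent may take
from `s` to `t` coincide. -/
theorem stmt_13 (G : TaskGraph V) (β : ℝ) (hβ0 : 0 < β) (hβ1 : β ≤ 1)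
    (r : ℝ) (hr : 0 < r) (E' : Finset (V × V)) (hE' : E' ⊆ G.E)
    (hpath : ∃ p : List V, IsWalkFrom E' p G.s G.t)
    (c' : V × V → ℝ) (hc'def : c' = fun e => if e ∈ E' then 0 else r + 1) :
    (Motivating E' G.c G.s G.t β r ↔ MotivatingConfig G β r c') ∧
      (Motivating E' G.c G.s G.t β r →
        ∀ q : List V, AgentWalk E' G.c G.s G.t β r q ↔
          AgentWalk G.E (addc G c') G.s G.t β r q) := by
  have hstep : ∀ v w, GreedyStep E' G.c G.t β r v w ↔
      GreedyStep G.E (addc G c') G.t β r v w := by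
    intro v w
    apply greedyStep_iff hβ0 hβ1 hr hE'
    · intro e he
      have := G.c_nonneg e he
      simp only [addc, hc'def]
      split_ifs <;> linarith
    · intro e he
      simp [addc, hc'def, he]
    · intro e he hne
      have := G.c_nonneg e he
      simp only [addc, hc'def, if_neg hne]
      linarith
  exact ⟨⟨motivating_of_greedyStep_iff hstep,
      motivating_of_greedyStep_iff fun v w => (hstep v w).symm⟩,
    fun _ q => ⟨agentWalk_mono fun v w => (hstep v w).1, agentWalk_mono fun v w => (hstep v w).2⟩⟩
end

section
/- Let φ be a 3-SAT formula with clauses c_1,…,c_ℓ over variables x_1,…,x_m, let β ∈ (0,1), and let ε satisfy 0 < ε < min{(1−β)^2, β(1−β)^3/(1+β), β(1−β)^2/(1+β)}. If φ has a satisfying assignment τ, then the cost configuration on G(φ,β,ε) that assigns extra cost (1−β)^2 to the edge (w_{k,τ(x_k)}, z_{k,τ(x_k)}) for every variable x_k, extra cost 1 to every forward edge ending in a node w_{k,y} with y ≠ τ(x_k), and 0 to all other edges, is motivating for the reward 1/β. -/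
/-!
Write `q = 1 - β`, so that the reward `1/β` makes the agent continue exactly when `ζ(v) ≤ 1`.
Under the modified costs the agent never enters a node `w_{k,y}` with `y ≠ τ(x_k)` nor a node
`z_{k,y}` (these nodes are called *forbidden*), and at every other node `ζ(v) ≤ 1`.

The upper bounds on `ζ` come from explicit plans. Every `w_{k,τ(x_k)}` is at distance at most
`1 + q + q²` from `t`, through its shortcut, and every `w_{k,y}` with `y ≠ τ(x_k)` at distance at
most `1 + q`. Since `τ` satisfies `φ`, every clause has a true literal; its type-one shortcut leads
to a node of the latter kind, so its literal node is also at distance at most `1 + q + q²`. The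
identity `q³ + β (1 + q + q²) = 1` then gives `ζ(v) ≤ 1 - ε` at `s`, at the literal nodes, at `u₂`
and at the nodes `w_{k,τ(x_k)}`; at the remaining permitted nodes `ζ(v) ≤ 1` because
`q² + β (1 + q) = 1` (`permitted_plan`).

Conversely, every node `w_{k,y}` and `z_{k,y}` is at distance at least `2 - β = 1 + q` from `t`, by
a potential-function argument (`le_dcost_of_potential`). An edge from a permitted node into a
forbidden one costs at least `q²` after modification, so its perceived cost is at least
`q² + β (1 + q) = 1 > 1 - ε ≥ ζ(v)` and no greedy step uses it (`permitted_step`).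
-/

/-!
Framework: task graphs, present-biased agents, perceived costs, greedy walks,
motivating rewards, cost configurations and subgraphs
(Kleinberg–Oren model, following Albers–Kraft).
-/

variable {V : Type} [Fintype V] [DecidableEq V]

/-! The node set of the 3-SAT reduction graph `G(φ, β, ε)`. A 3-SAT formula with
`ℓ` clauses over `m` variables is encoded as `φ : Fin ℓ → Fin 3 → Fin m × Bool`,
where `φ i j = (k, b)` says that the `j`-th literal of clause `i` is `x_k` (if
`b = true`) resp. `¬ x_k` (if `b = false`). An assignment `τ : Fin m → Bool`
satisfies `φ` iff every clause contains a literal `(k, b)` with `τ k = b`. -/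

/-- Nodes of `G(φ, β, ε)`: the special nodes `s, t, u₁, …, u₅`, the literal nodes
`v_{i,j}`, the variable nodes `w_{k,y}` and the intermediate nodes `z_{k,y}`. -/
abbrev SatNode (ℓ m : ℕ) : Type :=
  Fin 7 ⊕ (Fin ℓ × Fin 3) ⊕ (Fin m × Bool) ⊕ (Fin m × Bool)

/-- The source `s`. -/
def nS {ℓ m : ℕ} : SatNode ℓ m := Sum.inl 0

/-- The target `t`. -/
def nT {ℓ m : ℕ} : SatNode ℓ m := Sum.inl 1

/-- The node `u_{i+1}` for `i : Fin 5`. -/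
def nU {ℓ m : ℕ} (i : Fin 5) : SatNode ℓ m := Sum.inl ⟨(i : ℕ) + 2, by omega⟩

/-- The literal node `v_{i,j}` (`0`-indexed). -/
def nLit {ℓ m : ℕ} (i : Fin ℓ) (j : Fin 3) : SatNode ℓ m := Sum.inr (Sum.inl (i, j))

/-- The variable node `w_{k,y}` (`0`-indexed; `y = true` means `T`). -/
def nVar {ℓ m : ℕ} (k : Fin m) (y : Bool) : SatNode ℓ m :=
  Sum.inr (Sum.inr (Sum.inl (k, y)))

/-- The intermediate node `z_{k,y}` of the type-three shortcut out of `w_{k,y}`. -/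
def nMid {ℓ m : ℕ} (k : Fin m) (y : Bool) : SatNode ℓ m :=
  Sum.inr (Sum.inr (Sum.inr (k, y)))

/-- The edge relation of the 3-SAT reduction graph `G(φ, β, ε)`. -/
def SatEdge {ℓ m : ℕ} (φ : Fin ℓ → Fin 3 → Fin m × Bool) (a b : SatNode ℓ m) : Prop :=
  -- forward edges s → v_{1,j}
  (∃ (i : Fin ℓ) (j : Fin 3), (i : ℕ) = 0 ∧ a = nS ∧ b = nLit i j) ∨
  -- forward edges v_{i,j} → v_{i+1,j'}
  (∃ (i i' : Fin ℓ) (j j' : Fin 3), (i' : ℕ) = (i : ℕ) + 1 ∧ a = nLit i j ∧ b = nLit i' j') ∨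
  -- forward edges v_{ℓ,j} → u₁
  (∃ (i : Fin ℓ) (j : Fin 3), (i : ℕ) = ℓ - 1 ∧ a = nLit i j ∧ b = nU 0) ∨
  -- forward edges u₂ → w_{1,y}
  (∃ (k : Fin m) (y : Bool), (k : ℕ) = 0 ∧ a = nU 1 ∧ b = nVar k y) ∨
  -- forward edges w_{k,y} → w_{k+1,y'}
  (∃ (k k' : Fin m) (y y' : Bool), (k' : ℕ) = (k : ℕ) + 1 ∧ a = nVar k y ∧ b = nVar k' y') ∨
  -- forward edges w_{m,y} → u₃
  (∃ (k : Fin m) (y : Bool), (k : ℕ) = m - 1 ∧ a = nVar k y ∧ b = nU 2) ∨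
  -- shortcuts of type one: v_{i,j} → w_{k,F} if the j-th literal of cᵢ is x_k,
  -- and v_{i,j} → w_{k,T} if it is ¬x_k
  (∃ (i : Fin ℓ) (j : Fin 3), a = nLit i j ∧ b = nVar (φ i j).1 (!(φ i j).2)) ∨
  -- shortcut of type two: u₂ → t
  (a = nU 1 ∧ b = nT) ∨
  -- shortcuts of type three: w_{k,y} → z_{k,y} → t
  (∃ (k : Fin m) (y : Bool), a = nVar k y ∧ b = nMid k y) ∨
  (∃ (k : Fin m) (y : Bool), a = nMid k y ∧ b = nT) ∨
  -- the remaining edges u₁ → u₂, u₃ → u₄, u₄ → u₅, u₅ → t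
  (a = nU 0 ∧ b = nU 1) ∨ (a = nU 2 ∧ b = nU 3) ∨ (a = nU 3 ∧ b = nU 4) ∨ (a = nU 4 ∧ b = nT)

/-- The costs of the edges of the 3-SAT reduction graph `G(φ, β, ε)`:
forward edges cost `(1−β)³ − ε`, type-one shortcuts cost `(1−β)²`, the type-two
shortcut costs `2 − β`, type-three shortcuts cost `0` and `2 − β`, and the edges
`u₁u₂, u₃u₄, u₄u₅, u₅t` cost `(1−β)², (1−β)², 1−β, 1`. -/
def SatCostSpec {ℓ m : ℕ} (β ε : ℝ) (G : TaskGraph (SatNode ℓ m)) : Prop :=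
  (∀ (i : Fin ℓ) (j : Fin 3), G.c (nS, nLit i j) = (1 - β) ^ 3 - ε) ∧
  (∀ (i i' : Fin ℓ) (j j' : Fin 3), G.c (nLit i j, nLit i' j') = (1 - β) ^ 3 - ε) ∧
  (∀ (i : Fin ℓ) (j : Fin 3), G.c (nLit i j, nU 0) = (1 - β) ^ 3 - ε) ∧
  (∀ (k : Fin m) (y : Bool), G.c (nU 1, nVar k y) = (1 - β) ^ 3 - ε) ∧
  (∀ (k k' : Fin m) (y y' : Bool), G.c (nVar k y, nVar k' y') = (1 - β) ^ 3 - ε) ∧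
  (∀ (k : Fin m) (y : Bool), G.c (nVar k y, nU 2) = (1 - β) ^ 3 - ε) ∧
  (∀ (i : Fin ℓ) (j : Fin 3) (k : Fin m) (y : Bool), G.c (nLit i j, nVar k y) = (1 - β) ^ 2) ∧
  (G.c (nU 1, nT) = 2 - β) ∧
  (∀ (k : Fin m) (y : Bool), G.c (nVar k y, nMid k y) = 0) ∧
  (∀ (k : Fin m) (y : Bool), G.c (nMid k y, nT) = 2 - β) ∧
  (G.c (nU 0, nU 1) = (1 - β) ^ 2) ∧
  (G.c (nU 2, nU 3) = (1 - β) ^ 2) ∧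
  (G.c (nU 3, nU 4) = 1 - β) ∧
  (G.c (nU 4, nT) = 1)

/-- `G` is the 3-SAT reduction task graph `G(φ, β, ε)`. -/
def IsSatGraph {ℓ m : ℕ} (φ : Fin ℓ → Fin 3 → Fin m × Bool) (β ε : ℝ)
    (G : TaskGraph (SatNode ℓ m)) : Prop :=
  G.s = nS ∧ G.t = nT ∧ (∀ a b : SatNode ℓ m, (a, b) ∈ G.E ↔ SatEdge φ a b) ∧
    SatCostSpec β ε G

open scoped Classical in
/-- The cost configuration derived from a satisfying assignment `τ`: extra cost
`(1−β)²` on the first edge `(w_{k,τ(x_k)}, z_{k,τ(x_k)})` of the type-three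
shortcut at each variable node selected by `τ`, extra cost `1` on every forward
edge ending in a variable node `w_{k,y}` with `y ≠ τ(x_k)`, and `0` elsewhere. -/
noncomputable def tauConfig {ℓ m : ℕ} (β : ℝ) (τ : Fin m → Bool) :
    SatNode ℓ m × SatNode ℓ m → ℝ := fun e =>
  if ∃ k : Fin m, e = (nVar k (τ k), nMid k (τ k)) then (1 - β) ^ 2
  else if ∃ k : Fin m, e.2 = nVar k (!(τ k)) ∧
      ((∃ (k' : Fin m) (y' : Bool), e.1 = nVar k' y') ∨ e.1 = nU 1) then 1
  else 0

/-! ### Walks, distances and perceived costs -/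

/-- Some walk from `v` to `t` has cost at most `x`. This certifies `d(v) ≤ x` and, at the same
time, that `t` is reachable from `v`. -/
def HasPlan (E : Finset (V × V)) (c : V × V → ℝ) (t v : V) (x : ℝ) : Prop :=
  ∃ p : List V, IsWalkFrom E p v t ∧ walkCost c p ≤ x

section General

set_option linter.unusedSectionVars false

variable {E : Finset (V × V)} {c : V × V → ℝ} {t : V}

lemma HasPlan.refl : HasPlan E c t t 0 :=
  ⟨[t], ⟨List.isChain_singleton _, rfl, rfl⟩, by simp [walkCost, walkEdges]⟩

lemma HasPlan.reaches {v : V} {x : ℝ} (h : HasPlan E c t v x) : Reaches E v t :=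
  let ⟨p, hp, _⟩ := h; ⟨p, hp⟩

lemma HasPlan.cons {v w : V} {x y : ℝ} (hE : (v, w) ∈ E) (h : HasPlan E c t w x)
    (hy : c (v, w) + x ≤ y) : HasPlan E c t v y := by
  obtain ⟨p, ⟨hw, hh, hl⟩, hx⟩ := h
  cases p with
  | nil => simp at hh
  | cons a p =>
    obtain rfl : a = w := by simpa using hh
    refine ⟨v :: a :: p, ⟨?_, rfl, ?_⟩, ?_⟩
    · exact List.isChain_cons_cons.2 ⟨hE, hw⟩
    · simpa [List.getLast?_cons_cons] using hl
    · simp only [walkCost, walkEdges, List.tail_cons, List.zip_cons_cons, List.map_cons,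
        List.sum_cons] at hx ⊢
      linarith

/-- A potential that drops along each edge by at most the cost of that edge bounds the cost of every
walk to `t` from below. -/
lemma potential_le_walkCost {π : V → ℝ} (hπt : π t ≤ 0)
    (hπ : ∀ a b, (a, b) ∈ E → π a ≤ c (a, b) + π b) (p : List V) :
    ∀ v, IsWalkFrom E p v t → π v ≤ walkCost c p := by
  induction p with
  | nil => rintro v ⟨-, hh, -⟩; simp at hh
  | cons a p ih =>
    rintro v ⟨hw, hh, hl⟩
    obtain rfl : a = v := by simpa using hh
    cases p with
    | nil =>
      obtain rfl : a = t := by simpa using hl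
      simpa [walkCost, walkEdges] using hπt
    | cons b p =>
      obtain ⟨hE, hw'⟩ := List.isChain_cons_cons.1 hw
      have h1 := ih b ⟨hw', rfl, by simpa [List.getLast?_cons_cons] using hl⟩
      have h2 := hπ a b hE
      simp only [walkCost, walkEdges, List.tail_cons, List.zip_cons_cons, List.map_cons,
        List.sum_cons] at h1 ⊢
      linarith

lemma le_dcost_of_potential {π : V → ℝ} (hπt : π t ≤ 0)
    (hπ : ∀ a b, (a, b) ∈ E → π a ≤ c (a, b) + π b) {v : V} (hv : Reaches E v t) :
    π v ≤ dcost E c t v := by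
  obtain ⟨p, hp⟩ := hv
  refine le_csInf ⟨_, p, hp, rfl⟩ ?_
  rintro _ ⟨q, hq, rfl⟩
  exact potential_le_walkCost hπt hπ q v hq

lemma HasPlan.dcost_le (hc : ∀ e ∈ E, 0 ≤ c e) {v : V} {x : ℝ} (h : HasPlan E c t v x) :
    dcost E c t v ≤ x := by
  obtain ⟨p, hp, hx⟩ := h
  refine le_trans (csInf_le ⟨0, ?_⟩ (Set.mem_image_of_mem _ hp)) hx
  rintro _ ⟨q, hq, rfl⟩
  exact potential_le_walkCost (π := fun _ => 0) le_rfl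
    (fun a b hE => by simpa using hc _ hE) q v hq

/-- The perceived costs of the plans available at a node form a finite set, so that `ζ` is attained
at every node that has a plan. -/
lemma finite_plans (β : ℝ) (v : V) :
    {x : ℝ | ∃ w : V, (v, w) ∈ E ∧ Reaches E w t ∧ etaCost E c t β (v, w) = x}.Finite :=
  (Set.finite_range fun w => etaCost E c t β (v, w)).subset
    (by rintro _ ⟨w, -, -, rfl⟩; exact ⟨w, rfl⟩)

lemma zetaCost_le (hc : ∀ e ∈ E, 0 ≤ c e) {β : ℝ} (hβ : 0 ≤ β) {v w : V} {x y : ℝ}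
    (hE : (v, w) ∈ E) (h : HasPlan E c t w x) (hy : c (v, w) + β * x ≤ y) :
    zetaCost E c t β v ≤ y := by
  refine (csInf_le (finite_plans β v).bddBelow ⟨w, hE, h.reaches, rfl⟩).trans ?_
  have := mul_le_mul_of_nonneg_left (h.dcost_le hc) hβ
  simp only [etaCost]
  linarith

lemma exists_greedyStep {β r : ℝ} {v w : V} (hv : v ≠ t) (hE : (v, w) ∈ E) (hw : Reaches E w t)
    (hζ : zetaCost E c t β v ≤ β * r) : ∃ w, GreedyStep E c t β r v w := by
  obtain ⟨w', hE', hr, he⟩ := Set.Nonempty.csInf_mem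
    (s := {x : ℝ | ∃ w : V, (v, w) ∈ E ∧ Reaches E w t ∧ etaCost E c t β (v, w) = x})
    ⟨_, w, hE, hw, rfl⟩ (finite_plans β v)
  exact ⟨w', hv, hE', hr, he, hζ⟩

end General

/-! ### The modified costs -/

section Reduction

variable {ℓ m : ℕ} {φ : Fin ℓ → Fin 3 → Fin m × Bool} {β ε : ℝ}
  {G : TaskGraph (SatNode ℓ m)} {τ : Fin m → Bool}

lemma tauConfig_nonneg (β : ℝ) (τ : Fin m → Bool) (e : SatNode ℓ m × SatNode ℓ m) :
    0 ≤ tauConfig β τ e := by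
  unfold tauConfig
  split_ifs <;> positivity

lemma tauConfig_mid (k : Fin m) :
    tauConfig (ℓ := ℓ) β τ (nVar k (τ k), nMid k (τ k)) = (1 - β) ^ 2 := by
  rw [tauConfig, if_pos ⟨k, rfl⟩]

lemma tauConfig_mid_not (k : Fin m) :
    tauConfig (ℓ := ℓ) β τ (nVar k (!τ k), nMid k (!τ k)) = 0 := by
  rw [tauConfig, if_neg, if_neg]
  · simp [nMid, nVar]
  · rintro ⟨k', h⟩
    simp only [nVar, nMid, Prod.mk.injEq, Sum.inr.injEq, Sum.inl.injEq] at h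
    obtain ⟨⟨rfl, h⟩, -⟩ := h
    simp at h

lemma tauConfig_var_not {a : SatNode ℓ m} (ha : (∃ k y, a = nVar k y) ∨ a = nU 1) (k : Fin m) :
    tauConfig β τ (a, nVar k (!τ k)) = 1 := by
  rw [tauConfig, if_neg, if_pos ⟨k, rfl, ha⟩]
  simp [nMid, nVar]

lemma tauConfig_var (a : SatNode ℓ m) (k : Fin m) : tauConfig β τ (a, nVar k (τ k)) = 0 := by
  rw [tauConfig, if_neg, if_neg]
  · rintro ⟨k', h, -⟩
    simp only [nVar, Prod.mk.injEq, Sum.inr.injEq, Sum.inl.injEq] at h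
    obtain ⟨rfl, h⟩ := h
    simp at h
  · simp [nMid, nVar]

lemma tauConfig_lit_left (i : Fin ℓ) (j : Fin 3) (b : SatNode ℓ m) :
    tauConfig β τ (nLit i j, b) = 0 := by
  rw [tauConfig, if_neg, if_neg] <;> simp [nLit, nVar, nU]

lemma tauConfig_lit_right (a : SatNode ℓ m) (i : Fin ℓ) (j : Fin 3) :
    tauConfig β τ (a, nLit i j) = 0 := by
  rw [tauConfig, if_neg, if_neg] <;> simp [nLit, nVar, nMid]

lemma tauConfig_inl_right (a : SatNode ℓ m) (i : Fin 7) :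
    tauConfig β τ (a, Sum.inl i) = 0 := by
  rw [tauConfig, if_neg, if_neg] <;> simp [nVar, nMid]

lemma tauConfig_U_right (a : SatNode ℓ m) (i : Fin 5) : tauConfig β τ (a, nU i) = 0 :=
  tauConfig_inl_right a _

lemma tauConfig_T_right (a : SatNode ℓ m) : tauConfig β τ (a, nT) = 0 :=
  tauConfig_inl_right a _

lemma addc_nonneg (β : ℝ) (τ : Fin m → Bool) (G : TaskGraph (SatNode ℓ m)) :
    ∀ e ∈ G.E, 0 ≤ addc G (tauConfig β τ) e := fun e he =>
  add_nonneg (G.c_nonneg e he) (tauConfig_nonneg β τ e)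

/-! ### Lower bounds on distances -/

/-- The potential certifying that the nodes `w_{k,y}` and `z_{k,y}` are at distance at least
`2 - β` from `t`: it is `2 - β` there and at `u₃`, `u₄`, it is `1` at `u₅`, and `0` elsewhere. -/
noncomputable def satPotential {ℓ m : ℕ} (β : ℝ) : SatNode ℓ m → ℝ
  | Sum.inl i => ![0, 0, 0, 0, 2 - β, 2 - β, 1] i
  | Sum.inr (Sum.inl _) => 0
  | Sum.inr (Sum.inr _) => 2 - β

lemma satPotential_le (hβ1 : β < 1) (hG : IsSatGraph φ β ε G) (a b : SatNode ℓ m)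
    (hE : (a, b) ∈ G.E) :
    satPotential β a ≤ addc G (tauConfig β τ) (a, b) + satPotential β b := by
  have hn := addc_nonneg β τ G _ hE
  have ht := tauConfig_nonneg β τ (a, b)
  obtain ⟨-, -, hE', -, -, -, -, -, -, -, -, -, h10, -, -, h13, h14⟩ := hG
  rcases (hE' a b).1 hE with ⟨i, j, -, rfl, rfl⟩ | ⟨i, i', j, j', -, rfl, rfl⟩ |
    ⟨i, j, -, rfl, rfl⟩ | ⟨k, y, -, rfl, rfl⟩ | ⟨k, k', y, y', -, rfl, rfl⟩ | ⟨k, y, -, rfl, rfl⟩ |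
    ⟨i, j, rfl, rfl⟩ | ⟨rfl, rfl⟩ | ⟨k, y, rfl, rfl⟩ | ⟨k, y, rfl, rfl⟩ |
    ⟨rfl, rfl⟩ | ⟨rfl, rfl⟩ | ⟨rfl, rfl⟩ | ⟨rfl, rfl⟩ <;>
  simp only [addc, h10, h13, h14] at hn ⊢ <;>
  simp [satPotential, nS, nT, nU, nLit, nVar, nMid] at hn ht ⊢ <;>
  linarith

lemma le_dcost_s15 (hβ1 : β < 1) (hG : IsSatGraph φ β ε G) {v : SatNode ℓ m}
    (hv : Reaches G.E v G.t) :
    satPotential β v ≤ dcost G.E (addc G (tauConfig β τ)) G.t v :=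
  le_dcost_of_potential (by rw [hG.2.1]; simp [satPotential, nT]) (satPotential_le hβ1 hG) hv

/-! ### Explicit plans -/

lemma plan_T (hG : IsSatGraph φ β ε G) : HasPlan G.E (addc G (tauConfig β τ)) G.t nT 0 := by
  have := hG.2.1
  rw [← this]; exact HasPlan.refl

lemma plan_U5 (hG : IsSatGraph φ β ε G) :
    HasPlan G.E (addc G (tauConfig β τ)) G.t (nU 4) 1 := by
  have hT := plan_T (τ := τ) hG
  obtain ⟨-, -, hE, -, -, -, -, -, -, -, -, -, -, -, -, -, h14⟩ := hG
  refine hT.cons ((hE _ _).2 (by simp [SatEdge])) ?_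
  simp [addc, h14, tauConfig_T_right]

lemma plan_U4 (hG : IsSatGraph φ β ε G) :
    HasPlan G.E (addc G (tauConfig β τ)) G.t (nU 3) (2 - β) := by
  have hT := plan_U5 (τ := τ) hG
  obtain ⟨-, -, hE, -, -, -, -, -, -, -, -, -, -, -, -, h13, h14⟩ := hG
  refine hT.cons ((hE _ _).2 (by simp [SatEdge])) ?_
  simp only [addc, h13, tauConfig_U_right]; linarith

lemma plan_U3 (hG : IsSatGraph φ β ε G) :
    HasPlan G.E (addc G (tauConfig β τ)) G.t (nU 2) ((1 - β) ^ 2 + (2 - β)) := by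
  have hT := plan_U4 (τ := τ) hG
  obtain ⟨-, -, hE, -, -, -, -, -, -, -, -, -, -, -, h12, h13, h14⟩ := hG
  refine hT.cons ((hE _ _).2 (by simp [SatEdge])) ?_
  simp only [addc, h12, tauConfig_U_right]; linarith

lemma plan_U2 (hG : IsSatGraph φ β ε G) :
    HasPlan G.E (addc G (tauConfig β τ)) G.t (nU 1) (2 - β) := by
  have hT := plan_T (τ := τ) hG
  obtain ⟨-, -, hE, -, -, -, -, -, -, -, h8, -⟩ := hG
  refine hT.cons ((hE _ _).2 (by simp [SatEdge])) ?_
  simp [addc, h8, tauConfig_T_right]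

lemma plan_U1 (hG : IsSatGraph φ β ε G) :
    HasPlan G.E (addc G (tauConfig β τ)) G.t (nU 0) ((1 - β) ^ 2 + (2 - β)) := by
  have hT := plan_U2 (τ := τ) hG
  obtain ⟨-, -, hE, -, -, -, -, -, -, -, -, -, -, h11, -⟩ := hG
  refine hT.cons ((hE _ _).2 (by simp [SatEdge])) ?_
  simp only [addc, h11, tauConfig_U_right]; linarith

lemma plan_mid (hG : IsSatGraph φ β ε G) (k : Fin m) (y : Bool) :
    HasPlan G.E (addc G (tauConfig β τ)) G.t (nMid k y) (2 - β) := by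
  have hT := plan_T (τ := τ) hG
  obtain ⟨-, -, hE, -, -, -, -, -, -, -, -, -, h10, -⟩ := hG
  refine hT.cons ((hE _ _).2 (by simp [SatEdge, nMid])) ?_
  simp [addc, h10, tauConfig_T_right]

lemma plan_var (hG : IsSatGraph φ β ε G) (k : Fin m) :
    HasPlan G.E (addc G (tauConfig β τ)) G.t (nVar k (τ k)) ((1 - β) ^ 2 + (2 - β)) := by
  have hT := plan_mid (τ := τ) hG k (τ k)
  obtain ⟨-, -, hE, -, -, -, -, -, -, -, -, h9, -⟩ := hG
  refine hT.cons ((hE _ _).2 (by simp [SatEdge, nVar, nMid])) ?_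
  simp only [addc, h9, tauConfig_mid]; linarith

lemma plan_var_not (hG : IsSatGraph φ β ε G) (k : Fin m) :
    HasPlan G.E (addc G (tauConfig β τ)) G.t (nVar k (!τ k)) (2 - β) := by
  have hT := plan_mid (τ := τ) hG k (!τ k)
  obtain ⟨-, -, hE, -, -, -, -, -, -, -, -, h9, -⟩ := hG
  refine hT.cons ((hE _ _).2 (by simp [SatEdge, nVar, nMid])) ?_
  simp only [addc, h9, tauConfig_mid_not]; linarith

/-- A true literal `(k, τ k)` has a type-one shortcut into `w_{k,y}` with `y ≠ τ(x_k)`, whose own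
shortcut carries no extra cost. -/
lemma plan_lit (hG : IsSatGraph φ β ε G) {i : Fin ℓ} {j : Fin 3}
    (hj : τ (φ i j).1 = (φ i j).2) :
    HasPlan G.E (addc G (tauConfig β τ)) G.t (nLit i j) ((1 - β) ^ 2 + (2 - β)) := by
  have hT := plan_var_not (τ := τ) hG (φ i j).1
  obtain ⟨-, -, hE, -, -, -, -, -, -, h7, -⟩ := hG
  refine hT.cons ((hE _ _).2 ?_) ?_
  · rw [hj]; simp only [SatEdge]
    exact Or.inr (Or.inr (Or.inr (Or.inr (Or.inr (Or.inr (Or.inl ⟨i, j, rfl, rfl⟩))))))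
  · simp only [addc, h7, tauConfig_lit_left]; linarith

/-! ### The agent avoids the forbidden nodes -/

/-- The nodes other than `z_{k,y}` and `w_{k,y}` with `y ≠ τ(x_k)`. -/
def Permitted (τ : Fin m → Bool) (v : SatNode ℓ m) : Prop :=
  (∀ k y, v ≠ nMid k y) ∧ ∀ k, v ≠ nVar k (!τ k)

/-- The permitted nodes with an edge into a forbidden one: the literal nodes, `u₂` and the nodes
`w_{k,τ(x_k)}`. -/
def Tempting (τ : Fin m → Bool) (v : SatNode ℓ m) : Prop :=
  (∃ i j, v = nLit i j) ∨ v = nU 1 ∨ ∃ k, v = nVar k (τ k)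

/-- Every permitted node other than `t` has an edge of perceived cost at most `1`, and tempting
nodes have one of perceived cost at most `1 - ε`. -/
lemma permitted_plan (hℓ : 0 < ℓ) (hm : 0 < m) (hε0 : 0 < ε) (hG : IsSatGraph φ β ε G)
    (hτ : ∀ i : Fin ℓ, ∃ j : Fin 3, τ (φ i j).1 = (φ i j).2)
    {v : SatNode ℓ m} (hv : Permitted τ v) (hvt : v ≠ nT) :
    ∃ w x y, (v, w) ∈ G.E ∧ HasPlan G.E (addc G (tauConfig β τ)) G.t w x ∧
      addc G (tauConfig β τ) (v, w) + β * x ≤ y ∧ y ≤ 1 ∧ (Tempting τ v → y ≤ 1 - ε) := by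
  have pT := plan_T (τ := τ) hG
  have p5 := plan_U5 (τ := τ) hG
  have p4 := plan_U4 (τ := τ) hG
  have p3 := plan_U3 (τ := τ) hG
  have p2 := plan_U2 (τ := τ) hG
  have p1 := plan_U1 (τ := τ) hG
  have pv := plan_var (τ := τ) hG
  have pl := fun i j => plan_lit (τ := τ) (i := i) (j := j) hG
  obtain ⟨-, -, hE, h1, h2, h3, h4, h5, h6, h7, h8, h9, h10, h11, h12, h13, h14⟩ := hG
  have key : (1 - β) ^ 3 - ε + 0 + β * ((1 - β) ^ 2 + (2 - β)) ≤ 1 - ε := by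
    ring_nf; exact le_rfl
  have key' : (1 - β) ^ 2 + 0 + β * (2 - β) ≤ 1 := by ring_nf; exact le_rfl
  have hε1 : 1 - ε ≤ 1 := by linarith
  rcases v with i | ⟨i, j⟩ | ⟨k, y⟩ | ⟨k, y⟩
  · fin_cases i
    · obtain ⟨j, hj⟩ := hτ ⟨0, hℓ⟩
      refine ⟨_, _, 1 - ε, (hE _ _).2 (Or.inl ⟨⟨0, hℓ⟩, j, rfl, rfl, rfl⟩), pl _ _ hj, ?_, hε1,
        fun _ => le_rfl⟩
      have := h1 ⟨0, hℓ⟩ j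
      simp only [addc, tauConfig_lit_right]
      exact this ▸ key
    · exact absurd rfl hvt
    · refine ⟨nU 1, _, 1, (hE (nU 0) _).2 (by simp [SatEdge]), p2, ?_, le_rfl, ?_⟩
      · simp only [addc, tauConfig_U_right]; exact h11 ▸ key'
      · simp [Tempting, nLit, nU, nVar]
    · refine ⟨_, _, 1 - ε, (hE (nU 1) (nVar ⟨0, hm⟩ (τ ⟨0, hm⟩))).2 ?_, pv _, ?_, hε1,
        fun _ => le_rfl⟩
      · exact Or.inr (Or.inr (Or.inr (Or.inl ⟨_, _, rfl, rfl, rfl⟩)))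
      · have := h4 ⟨0, hm⟩ (τ ⟨0, hm⟩)
        simp only [addc, tauConfig_var]; exact this ▸ key
    · refine ⟨nU 3, _, 1, (hE (nU 2) _).2 (by simp [SatEdge]), p4, ?_, le_rfl, ?_⟩
      · simp only [addc, tauConfig_U_right]; exact h12 ▸ key'
      · simp [Tempting, nLit, nU, nVar]
    · refine ⟨nU 4, _, 1, (hE (nU 3) _).2 (by simp [SatEdge]), p5, ?_, le_rfl, ?_⟩
      · simp only [addc, tauConfig_U_right]
        have : G.c (nU 3, nU 4) + 0 + β * 1 ≤ 1 := by rw [h13]; linarith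
        exact this
      · simp [Tempting, nLit, nU, nVar]
    · refine ⟨nT, _, 1, (hE (nU 4) _).2 (by simp [SatEdge]), pT, ?_, le_rfl, ?_⟩
      · simp only [addc, tauConfig_T_right]
        have : G.c (nU 4, nT) + 0 + β * 0 ≤ 1 := by rw [h14]; linarith
        exact this
      · simp [Tempting, nLit, nU, nVar]
  · change ∃ w x y, (nLit i j, w) ∈ G.E ∧ HasPlan _ _ _ w x ∧
      addc G (tauConfig β τ) (nLit i j, w) + β * x ≤ y ∧ y ≤ 1 ∧ (_ → y ≤ 1 - ε)
    by_cases hi : (i : ℕ) + 1 < ℓ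
    · obtain ⟨j', hj'⟩ := hτ ⟨i + 1, hi⟩
      refine ⟨_, _, 1 - ε, (hE _ _).2 (Or.inr (Or.inl ⟨i, ⟨i + 1, hi⟩, j, j', rfl, rfl, rfl⟩)),
        pl _ _ hj', ?_, hε1, fun _ => le_rfl⟩
      simpa only [addc, tauConfig_lit_right, h2] using key
    · refine ⟨_, _, 1 - ε, (hE _ _).2 (Or.inr (Or.inr (Or.inl ⟨i, j, by omega, rfl, rfl⟩))),
        p1, ?_, hε1, fun _ => le_rfl⟩
      simpa only [addc, tauConfig_U_right, h3] using key
  · change ∃ w x y', (nVar k y, w) ∈ G.E ∧ HasPlan _ _ _ w x ∧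
      addc G (tauConfig β τ) (nVar k y, w) + β * x ≤ y' ∧ y' ≤ 1 ∧ (_ → y' ≤ 1 - ε)
    by_cases hk : (k : ℕ) + 1 < m
    · refine ⟨nVar ⟨k + 1, hk⟩ (τ ⟨k + 1, hk⟩), _, 1 - ε, (hE _ _).2
        (Or.inr (Or.inr (Or.inr (Or.inr (Or.inl ⟨k, ⟨k + 1, hk⟩, y, _, rfl, rfl, rfl⟩))))),
        pv _, ?_, hε1, fun _ => le_rfl⟩
      simpa only [addc, tauConfig_var, h5] using key
    · refine ⟨_, _, 1 - ε, (hE _ _).2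
        (Or.inr (Or.inr (Or.inr (Or.inr (Or.inr (Or.inl ⟨k, y, by omega, rfl, rfl⟩)))))),
        p3, ?_, hε1, fun _ => le_rfl⟩
      simpa only [addc, tauConfig_U_right, h6] using key
  · exact absurd rfl (hv.1 k y)

/-- An edge from a permitted node into a forbidden one starts at a tempting node and costs at
least `(1 - β)²` after the modification. -/
lemma forbidden_edge (hβ0 : 0 < β) (hβ1 : β < 1) (hG : IsSatGraph φ β ε G)
    {v w : SatNode ℓ m} (hv : Permitted τ v) (hE : (v, w) ∈ G.E) (hw : ¬ Permitted τ w) :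
    Tempting τ v ∧ (1 - β) ^ 2 ≤ addc G (tauConfig β τ) (v, w) := by
  have hn := G.c_nonneg _ hE
  have hq : (1 - β) ^ 2 ≤ 1 := by nlinarith
  obtain ⟨-, -, hE', h1, h2, h3, h4, h5, h6, h7, h8, h9, h10, h11, h12, h13, h14⟩ := hG
  have hvar : ∀ k y, nVar k y ≠ (v : SatNode ℓ m) ∨ y = τ k := by
    intro k y
    by_cases h : y = τ k
    · exact Or.inr h
    · refine Or.inl fun hk => hv.2 k ?_
      rw [← hk, Bool.eq_not.2 h]
  rcases (hE' v w).1 hE with ⟨i, j, -, rfl, rfl⟩ | ⟨i, i', j, j', -, rfl, rfl⟩ |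
    ⟨i, j, -, rfl, rfl⟩ | ⟨k, y, -, rfl, rfl⟩ | ⟨k, k', y, y', -, rfl, rfl⟩ | ⟨k, y, -, rfl, rfl⟩ |
    ⟨i, j, rfl, rfl⟩ | ⟨rfl, rfl⟩ | ⟨k, y, rfl, rfl⟩ | ⟨k, y, rfl, rfl⟩ |
    ⟨rfl, rfl⟩ | ⟨rfl, rfl⟩ | ⟨rfl, rfl⟩ | ⟨rfl, rfl⟩
  case inr.inr.inr.inl =>
    have hy : y = !τ k := by
      by_contra h
      refine hw ⟨by simp [nVar, nMid], fun k' hk' => h ?_⟩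
      simp only [nVar, Sum.inr.injEq, Sum.inl.injEq, Prod.mk.injEq] at hk'
      rw [hk'.2, hk'.1]
    subst hy
    refine ⟨Or.inr (Or.inl rfl), ?_⟩
    rw [addc, tauConfig_var_not (Or.inr rfl)]; linarith
  case inr.inr.inr.inr.inl =>
    have hy : y' = !τ k' := by
      by_contra h
      refine hw ⟨by simp [nVar, nMid], fun k' hk' => h ?_⟩
      simp only [nVar, Sum.inr.injEq, Sum.inl.injEq, Prod.mk.injEq] at hk'
      rw [hk'.2, hk'.1]
    subst hy
    obtain rfl := (hvar k y).resolve_left (fun h => h rfl)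
    refine ⟨Or.inr (Or.inr ⟨k, rfl⟩), ?_⟩
    rw [addc, tauConfig_var_not (Or.inl ⟨_, _, rfl⟩)]; linarith
  case inr.inr.inr.inr.inr.inr.inl =>
    refine ⟨Or.inl ⟨i, j, rfl⟩, ?_⟩
    rw [addc, tauConfig_lit_left, h7]; linarith
  case inr.inr.inr.inr.inr.inr.inr.inr.inl =>
    obtain rfl := (hvar k y).resolve_left (fun h => h rfl)
    refine ⟨Or.inr (Or.inr ⟨k, rfl⟩), ?_⟩
    rw [addc, tauConfig_mid]; linarith
  case inr.inr.inr.inr.inr.inr.inr.inr.inr.inl => exact absurd rfl (hv.1 k y)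
  all_goals exact absurd ⟨by simp [nU, nT, nLit, nMid], by simp [nU, nT, nLit, nVar]⟩ hw

lemma potential_forbidden {w : SatNode ℓ m} (hw : ¬ Permitted τ w) :
    satPotential β w = 2 - β := by
  rcases w with i | ⟨i, j⟩ | w | w
  · exact absurd ⟨by simp [nMid], by simp [nVar]⟩ hw
  · exact absurd ⟨by simp [nMid], by simp [nVar]⟩ hw
  · rfl
  · rfl

lemma permitted_step (hℓ : 0 < ℓ) (hm : 0 < m) (hβ0 : 0 < β) (hβ1 : β < 1) (hε0 : 0 < ε)
    (hG : IsSatGraph φ β ε G) (hτ : ∀ i : Fin ℓ, ∃ j : Fin 3, τ (φ i j).1 = (φ i j).2)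
    {r : ℝ} {v w : SatNode ℓ m} (hv : Permitted τ v)
    (h : GreedyStep G.E (addc G (tauConfig β τ)) G.t β r v w) : Permitted τ w := by
  by_contra hw
  obtain ⟨hvt, hE, hr, heq, -⟩ := h
  obtain ⟨ht, hcost⟩ := forbidden_edge hβ0 hβ1 hG hv hE hw
  obtain ⟨w', x, y, hE', hp, hy, -, hy'⟩ :=
    permitted_plan hℓ hm hε0 hG hτ hv (fun h => hvt (h.trans hG.2.1.symm))
  have h1 := zetaCost_le (addc_nonneg β τ G) hβ0.le hE' hp hy
  have h2 := le_dcost_s15 (τ := τ) hβ1 hG hr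
  rw [potential_forbidden hw] at h2
  have h3 := mul_le_mul_of_nonneg_left h2 hβ0.le
  have h4 := hy' ht
  simp only [etaCost] at heq
  nlinarith

end Reduction

/-- If `φ` has a satisfying assignment `τ`, then the cost
configuration `tauConfig β τ` is motivating for the reward `1/β` on the 3-SAT
reduction graph `G(φ, β, ε)`, provided
`0 < ε < min {(1−β)², β(1−β)³/(1+β), β(1−β)²/(1+β)}`. -/
theorem stmt_15 {ℓ m : ℕ} (hℓ : 0 < ℓ) (hm : 0 < m)
    (φ : Fin ℓ → Fin 3 → Fin m × Bool) (β ε : ℝ)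
    (hβ0 : 0 < β) (hβ1 : β < 1) (hε0 : 0 < ε)
    (hε : ε < min ((1 - β) ^ 2)
      (min (β * (1 - β) ^ 3 / (1 + β)) (β * (1 - β) ^ 2 / (1 + β))))
    (G : TaskGraph (SatNode ℓ m)) (hG : IsSatGraph φ β ε G)
    (τ : Fin m → Bool) (hτ : ∀ i : Fin ℓ, ∃ j : Fin 3, τ (φ i j).1 = (φ i j).2) :
    MotivatingConfig G β (1 / β) (tauConfig β τ) := by
  have hinv : ∀ v, AgentReach G.E (addc G (tauConfig β τ)) G.s G.t β (1 / β) v →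
      Permitted τ v := by
    intro v hv
    induction hv with
    | start => rw [hG.1]; exact ⟨by simp [nS, nMid], by simp [nS, nVar]⟩
    | step _ hs ih => exact permitted_step hℓ hm hβ0 hβ1 hε0 hG hτ ih hs
  intro v hv hvt
  obtain ⟨w, x, y, hE, hp, hy, hy1, -⟩ :=
    permitted_plan hℓ hm hε0 hG hτ (hinv v hv) (fun h => hvt (h.trans hG.2.1.symm))
  refine exists_greedyStep hvt hE hp.reaches ?_
  rw [mul_one_div_cancel hβ0.ne']
  exact (zetaCost_le (addc_nonneg β τ G) hβ0.le hE hp hy).trans hy1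
end
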